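/- Fundamental lemma of the effect logical relation: (1) if Γ ⊢ V : A then Γ ⊨ V : A; (2) if Γ ⊢ M :^φ B then Γ ⊨ M :^φ B. -/

import Mathlib

set_option autoImplicit false

/-- A preordered monoid of effects `(E, ·, ⊥, ≤eff)`, with a distinguished `tock` effect. -/
structure EffSig (E : Type) where
  op : E → E → E
  bot : E
  tock : E
  le : E → E → Prop
  op_assoc : ∀ a b c, op (op a b) c = op a (op b c)
  bot_op : ∀ a, op bot a = a
  op_bot : ∀ a, op a bot = a
  le_refl : ∀ a, le a a
  le_trans : ∀ a b c, le a b → le b c → le a c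
  le_op : ∀ a b c d, le a b → le c d → le (op a c) (op b d)

namespace CBPVEff

mutual
/-- CBPV value types: `unit`, graded thunks `U_φ B`, positive products. -/
inductive VTy (E : Type) : Type where
  | unit : VTy E
  | thunk : E → CTy E → VTy E
  | prod : VTy E → VTy E → VTy E
/-- CBPV computation types: functions, returners `F A`, negative products. -/
inductive CTy (E : Type) : Type where
  | arr : VTy E → CTy E → CTy E
  | F : VTy E → CTy E
  | wth : CTy E → CTy E → CTy E
end

mutual
/-- CBPV values (de Bruijn indices for variables). -/
inductive Val : Type where
  | var : Nat → Val
  | unit : Val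
  | thunk : Comp → Val
  | pair : Val → Val → Val
/-- CBPV computations. -/
inductive Comp : Type where
  | lam : Comp → Comp
  | app : Comp → Val → Comp
  | force : Val → Comp
  | split : Val → Comp → Comp
  | cpair : Comp → Comp → Comp
  | fst : Comp → Comp
  | snd : Comp → Comp
  | ret : Val → Comp
  | letin : Comp → Comp → Comp
  | tick : Comp
end

mutual
/-- The value typing judgment `Γ ⊢ V : A` of the CBPV type-and-effect system. -/
inductive VHasTy {E : Type} (S : EffSig E) : List (VTy E) → Val → VTy E → Prop where
  | var : ∀ {Γ : List (VTy E)} {x : Nat} {A : VTy E},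
      Γ[x]? = some A → VHasTy S Γ (.var x) A
  | unit : ∀ {Γ : List (VTy E)}, VHasTy S Γ .unit .unit
  | thunk : ∀ {Γ : List (VTy E)} {M : Comp} {φ : E} {B : CTy E},
      CHasTy S Γ M φ B → VHasTy S Γ (.thunk M) (.thunk φ B)
  | pair : ∀ {Γ : List (VTy E)} {V₁ V₂ : Val} {A₁ A₂ : VTy E},
      VHasTy S Γ V₁ A₁ → VHasTy S Γ V₂ A₂ → VHasTy S Γ (.pair V₁ V₂) (.prod A₁ A₂)

/-- The computation typing judgment `Γ ⊢ M :^φ B` of the CBPV type-and-effect system. -/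
inductive CHasTy {E : Type} (S : EffSig E) : List (VTy E) → Comp → E → CTy E → Prop where
  | tick : ∀ {Γ : List (VTy E)} {φ : E}, S.le S.tock φ → CHasTy S Γ .tick φ (.F .unit)
  | lam : ∀ {Γ : List (VTy E)} {A : VTy E} {M : Comp} {φ : E} {B : CTy E},
      CHasTy S (A :: Γ) M φ B → CHasTy S Γ (.lam M) φ (.arr A B)
  | app : ∀ {Γ : List (VTy E)} {M : Comp} {V : Val} {A : VTy E} {φ : E} {B : CTy E},
      CHasTy S Γ M φ (.arr A B) → VHasTy S Γ V A → CHasTy S Γ (.app M V) φ B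
  | force : ∀ {Γ : List (VTy E)} {V : Val} {φ' φ : E} {B : CTy E},
      VHasTy S Γ V (.thunk φ' B) → S.le φ' φ → CHasTy S Γ (.force V) φ B
  | ret : ∀ {Γ : List (VTy E)} {V : Val} {A : VTy E} {φ : E},
      VHasTy S Γ V A → S.le S.bot φ → CHasTy S Γ (.ret V) φ (.F A)
  | letin : ∀ {Γ : List (VTy E)} {M N : Comp} {A : VTy E} {φ₁ φ₂ φ : E} {B : CTy E},
      CHasTy S Γ M φ₁ (.F A) → CHasTy S (A :: Γ) N φ₂ B →
      S.le (S.op φ₁ φ₂) φ → CHasTy S Γ (.letin M N) φ B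
  | split : ∀ {Γ : List (VTy E)} {V : Val} {A₁ A₂ : VTy E} {N : Comp} {φ : E} {B : CTy E},
      VHasTy S Γ V (.prod A₁ A₂) → CHasTy S (A₂ :: A₁ :: Γ) N φ B →
      CHasTy S Γ (.split V N) φ B
  | cpair : ∀ {Γ : List (VTy E)} {M₁ M₂ : Comp} {φ : E} {B₁ B₂ : CTy E},
      CHasTy S Γ M₁ φ B₁ → CHasTy S Γ M₂ φ B₂ → CHasTy S Γ (.cpair M₁ M₂) φ (.wth B₁ B₂)
  | fst : ∀ {Γ : List (VTy E)} {M : Comp} {φ : E} {B₁ B₂ : CTy E},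
      CHasTy S Γ M φ (.wth B₁ B₂) → CHasTy S Γ (.fst M) φ B₁
  | snd : ∀ {Γ : List (VTy E)} {M : Comp} {φ : E} {B₁ B₂ : CTy E},
      CHasTy S Γ M φ (.wth B₁ B₂) → CHasTy S Γ (.snd M) φ B₂
end

/-- Closed values: closures of thunks, unit, and pairs of closed values. -/
inductive CloVal : Type where
  | clo : List CloVal → Comp → CloVal
  | unit : CloVal
  | pair : CloVal → CloVal → CloVal

/-- Closed terminal computations. -/
inductive Terminal : Type where
  | ret : CloVal → Terminal
  | lamClo : List CloVal → Comp → Terminal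
  | cpairClo : List CloVal → Comp → Comp → Terminal

/-- The value judgment `ρ ⊢ V ⇓ W`: closing a value under an environment. -/
inductive EvalVal : List CloVal → Val → CloVal → Prop where
  | var : ∀ {ρ : List CloVal} {x : Nat} {W : CloVal},
      ρ[x]? = some W → EvalVal ρ (.var x) W
  | unit : ∀ {ρ : List CloVal}, EvalVal ρ .unit .unit
  | thunk : ∀ {ρ : List CloVal} {M : Comp}, EvalVal ρ (.thunk M) (.clo ρ M)
  | pair : ∀ {ρ : List CloVal} {V₁ V₂ : Val} {W₁ W₂ : CloVal},
      EvalVal ρ V₁ W₁ → EvalVal ρ V₂ W₂ → EvalVal ρ (.pair V₁ V₂) (.pair W₁ W₂)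

/-- The effect-instrumented big-step judgment `ρ ⊢ M ⇓ T # φ`. -/
inductive EvalComp {E : Type} (S : EffSig E) : List CloVal → Comp → Terminal → E → Prop where
  | tick : ∀ {ρ : List CloVal}, EvalComp S ρ .tick (.ret .unit) S.tock
  | ret : ∀ {ρ : List CloVal} {V : Val} {W : CloVal},
      EvalVal ρ V W → EvalComp S ρ (.ret V) (.ret W) S.bot
  | lam : ∀ {ρ : List CloVal} {M : Comp}, EvalComp S ρ (.lam M) (.lamClo ρ M) S.bot
  | cpair : ∀ {ρ : List CloVal} {M₁ M₂ : Comp},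
      EvalComp S ρ (.cpair M₁ M₂) (.cpairClo ρ M₁ M₂) S.bot
  | app : ∀ {ρ ρ' : List CloVal} {M M' : Comp} {V : Val} {W : CloVal} {T : Terminal} {φ₁ φ₂ : E},
      EvalComp S ρ M (.lamClo ρ' M') φ₁ → EvalVal ρ V W →
      EvalComp S (W :: ρ') M' T φ₂ → EvalComp S ρ (.app M V) T (S.op φ₁ φ₂)
  | force : ∀ {ρ ρ' : List CloVal} {V : Val} {M : Comp} {T : Terminal} {φ : E},
      EvalVal ρ V (.clo ρ' M) → EvalComp S ρ' M T φ → EvalComp S ρ (.force V) T φ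
  | letin : ∀ {ρ : List CloVal} {M N : Comp} {W : CloVal} {T : Terminal} {φ₁ φ₂ : E},
      EvalComp S ρ M (.ret W) φ₁ → EvalComp S (W :: ρ) N T φ₂ →
      EvalComp S ρ (.letin M N) T (S.op φ₁ φ₂)
  | split : ∀ {ρ : List CloVal} {V : Val} {W₁ W₂ : CloVal} {N : Comp} {T : Terminal} {φ : E},
      EvalVal ρ V (.pair W₁ W₂) → EvalComp S (W₂ :: W₁ :: ρ) N T φ →
      EvalComp S ρ (.split V N) T φ
  | fst : ∀ {ρ ρ' : List CloVal} {M M₁ M₂ : Comp} {T : Terminal} {φ₁ φ₂ : E},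
      EvalComp S ρ M (.cpairClo ρ' M₁ M₂) φ₁ → EvalComp S ρ' M₁ T φ₂ →
      EvalComp S ρ (.fst M) T (S.op φ₁ φ₂)
  | snd : ∀ {ρ ρ' : List CloVal} {M M₁ M₂ : Comp} {T : Terminal} {φ₁ φ₂ : E},
      EvalComp S ρ M (.cpairClo ρ' M₁ M₂) φ₁ → EvalComp S ρ' M₂ T φ₂ →
      EvalComp S ρ (.snd M) T (S.op φ₁ φ₂)

mutual
/-- The logical relation on closed values: `W ∈ 𝒲⟦A⟧`. -/
def WRel {E : Type} (S : EffSig E) : VTy E → CloVal → Prop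
  | .unit, W => W = CloVal.unit
  | .thunk φ B, W => ∃ (ρ : List CloVal) (M : Comp), W = CloVal.clo ρ M ∧
      ∃ (T : Terminal) (φ₁ φ₂ : E), EvalComp S ρ M T φ₁ ∧ TRel S B T φ₂ ∧
        S.le (S.op φ₁ φ₂) φ
  | .prod A₁ A₂, W => ∃ (W₁ W₂ : CloVal), W = CloVal.pair W₁ W₂ ∧
      WRel S A₁ W₁ ∧ WRel S A₂ W₂

/-- The logical relation on closed terminals paired with effects: `(T, φ) ∈ 𝒯⟦B⟧`. -/
def TRel {E : Type} (S : EffSig E) : CTy E → Terminal → E → Prop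
  | .F A, T, φ => ∃ (W : CloVal), T = Terminal.ret W ∧ WRel S A W ∧ S.le S.bot φ
  | .arr A B, T, φ => ∃ (ρ : List CloVal) (M : Comp), T = Terminal.lamClo ρ M ∧
      ∀ (W : CloVal), WRel S A W →
        ∃ (T' : Terminal) (φ₁ φ₂ : E), EvalComp S (W :: ρ) M T' φ₁ ∧ TRel S B T' φ₂ ∧
          S.le (S.op φ₁ φ₂) φ
  | .wth B₁ B₂, T, φ => ∃ (ρ : List CloVal) (M₁ M₂ : Comp), T = Terminal.cpairClo ρ M₁ M₂ ∧
      (∃ (T' : Terminal) (φ₁ φ₂ : E), EvalComp S ρ M₁ T' φ₁ ∧ TRel S B₁ T' φ₂ ∧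
        S.le (S.op φ₁ φ₂) φ) ∧
      (∃ (T' : Terminal) (φ₁ φ₂ : E), EvalComp S ρ M₂ T' φ₁ ∧ TRel S B₂ T' φ₂ ∧
        S.le (S.op φ₁ φ₂) φ)
end

/-- The logical relation on computations with environments and effects: `(ρ, M, φ) ∈ ℳ⟦B⟧`. -/
def MRel {E : Type} (S : EffSig E) (B : CTy E) (ρ : List CloVal) (M : Comp) (φ : E) : Prop :=
  ∃ (T : Terminal) (φ₁ φ₂ : E), EvalComp S ρ M T φ₁ ∧ TRel S B T φ₂ ∧ S.le (S.op φ₁ φ₂) φ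

/-- The logical relation on values with environments: `(ρ, V) ∈ 𝒱⟦A⟧`. -/
def VRel {E : Type} (S : EffSig E) (A : VTy E) (ρ : List CloVal) (V : Val) : Prop :=
  ∃ (W : CloVal), EvalVal ρ V W ∧ WRel S A W

/-- Semantic typing of environments: `Γ ⊨ ρ`. -/
def EnvOk {E : Type} (S : EffSig E) (Γ : List (VTy E)) (ρ : List CloVal) : Prop :=
  ∀ (x : Nat) (A : VTy E), Γ[x]? = some A → ∃ (W : CloVal), ρ[x]? = some W ∧ WRel S A W

/-- Semantic typing of values: `Γ ⊨ V : A`. -/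
def VSem {E : Type} (S : EffSig E) (Γ : List (VTy E)) (V : Val) (A : VTy E) : Prop :=
  ∀ (ρ : List CloVal), EnvOk S Γ ρ → VRel S A ρ V

/-- Semantic typing of computations: `Γ ⊨ M :^φ B`. -/
def CSem {E : Type} (S : EffSig E) (Γ : List (VTy E)) (M : Comp) (φ : E) (B : CTy E) : Prop :=
  ∀ (ρ : List CloVal), EnvOk S Γ ρ → MRel S B ρ M φ

theorem EnvOk.cons {E : Type} {S : EffSig E} {Γ : List (VTy E)} {ρ : List CloVal}
    {A : VTy E} {W : CloVal} (hW : WRel S A W) (h : EnvOk S Γ ρ) :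
    EnvOk S (A :: Γ) (W :: ρ) := by
  intro x A' hx
  cases x with
  | zero =>
    simp only [List.getElem?_cons_zero, Option.some.injEq] at hx
    subst hx
    exact ⟨W, by simp, hW⟩
  | succ n =>
    simp only [List.getElem?_cons_succ] at hx ⊢
    exact h n A' hx

theorem le_seq {E : Type} (S : EffSig E) {a b c d φ : E}
    (h₁ : S.le (S.op c d) b) (h₂ : S.le (S.op a b) φ) : S.le (S.op (S.op a c) d) φ := by
  rw [S.op_assoc]
  exact S.le_trans _ _ _ (S.le_op _ _ _ _ (S.le_refl a) h₁) h₂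

mutual
theorem fund_val {E : Type} (S : EffSig E) {Γ : List (VTy E)} {V : Val} {A : VTy E}
    (h : VHasTy S Γ V A) : VSem S Γ V A := by
  match h with
  | .var hx =>
    intro ρ hρ
    obtain ⟨W, h1, h2⟩ := hρ _ _ hx
    exact ⟨W, .var h1, h2⟩
  | .unit =>
    intro ρ hρ
    exact ⟨_, .unit, by simp [WRel]⟩
  | .thunk hM =>
    intro ρ hρ
    refine ⟨_, .thunk, ?_⟩
    rw [WRel]
    exact ⟨_, _, rfl, fund_comp S hM ρ hρ⟩
  | .pair h1 h2 =>
    intro ρ hρ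
    obtain ⟨W₁, e1, r1⟩ := fund_val S h1 ρ hρ
    obtain ⟨W₂, e2, r2⟩ := fund_val S h2 ρ hρ
    refine ⟨_, .pair e1 e2, ?_⟩
    rw [WRel]
    exact ⟨_, _, rfl, r1, r2⟩
termination_by structural h

theorem fund_comp {E : Type} (S : EffSig E) {Γ : List (VTy E)} {M : Comp} {φ : E} {B : CTy E}
    (h : CHasTy S Γ M φ B) : CSem S Γ M φ B := by
  match h with
  | .tick hle =>
    intro ρ hρ
    refine ⟨_, _, S.bot, .tick, ?_, by rwa [S.op_bot]⟩
    rw [TRel]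
    exact ⟨_, rfl, by simp [WRel], S.le_refl _⟩
  | .lam hM =>
    intro ρ hρ
    refine ⟨_, _, _, .lam, ?_, by rw [S.bot_op]; exact S.le_refl _⟩
    rw [TRel]
    exact ⟨_, _, rfl, fun W hW => fund_comp S hM _ (EnvOk.cons hW hρ)⟩
  | .app hM hV =>
    intro ρ hρ
    obtain ⟨T, a, b, e1, r1, l1⟩ := fund_comp S hM ρ hρ
    obtain ⟨W, e2, r2⟩ := fund_val S hV ρ hρ
    rw [TRel] at r1
    obtain ⟨ρ', M', rfl, r1⟩ := r1
    obtain ⟨T', c, d, e3, r3, l3⟩ := r1 W r2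
    exact ⟨T', _, d, .app e1 e2 e3, r3, le_seq S l3 l1⟩
  | .force hV hle =>
    intro ρ hρ
    obtain ⟨W, e2, r2⟩ := fund_val S hV ρ hρ
    rw [WRel] at r2
    obtain ⟨ρ', M', rfl, T', c, d, e3, r3, l3⟩ := r2
    exact ⟨T', c, d, .force e2 e3, r3, S.le_trans _ _ _ l3 hle⟩
  | .ret hV hle =>
    intro ρ hρ
    obtain ⟨W, e2, r2⟩ := fund_val S hV ρ hρ
    refine ⟨_, _, _, .ret e2, ?_, by rw [S.bot_op]; exact S.le_refl _⟩
    rw [TRel]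
    exact ⟨_, rfl, r2, hle⟩
  | .letin hM hN hle =>
    intro ρ hρ
    obtain ⟨T, a, b, e1, r1, l1⟩ := fund_comp S hM ρ hρ
    rw [TRel] at r1
    obtain ⟨W, rfl, r1, lb⟩ := r1
    obtain ⟨T', c, d, e3, r3, l3⟩ := fund_comp S hN _ (EnvOk.cons r1 hρ)
    refine ⟨T', _, d, .letin e1 e3, r3, le_seq S l3 (S.le_trans _ _ _ ?_ hle)⟩
    refine S.le_op _ _ _ _ (S.le_trans _ _ _ ?_ l1) (S.le_refl _)
    have := S.le_op _ _ _ _ (S.le_refl a) lb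
    rwa [S.op_bot] at this
  | .split hV hN =>
    intro ρ hρ
    obtain ⟨W, e2, r2⟩ := fund_val S hV ρ hρ
    rw [WRel] at r2
    obtain ⟨W₁, W₂, rfl, r1, r2⟩ := r2
    obtain ⟨T', c, d, e3, r3, l3⟩ := fund_comp S hN _ (EnvOk.cons r2 (EnvOk.cons r1 hρ))
    exact ⟨T', c, d, .split e2 e3, r3, l3⟩
  | .cpair h1 h2 =>
    intro ρ hρ
    refine ⟨_, _, _, .cpair, ?_, by rw [S.bot_op]; exact S.le_refl _⟩
    rw [TRel]
    exact ⟨_, _, _, rfl, fund_comp S h1 ρ hρ, fund_comp S h2 ρ hρ⟩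
  | .fst hM =>
    intro ρ hρ
    obtain ⟨T, a, b, e1, r1, l1⟩ := fund_comp S hM ρ hρ
    rw [TRel] at r1
    obtain ⟨ρ', M₁, M₂, rfl, ⟨T', c, d, e3, r3, l3⟩, _⟩ := r1
    exact ⟨T', _, d, .fst e1 e3, r3, le_seq S l3 l1⟩
  | .snd hM =>
    intro ρ hρ
    obtain ⟨T, a, b, e1, r1, l1⟩ := fund_comp S hM ρ hρ
    rw [TRel] at r1
    obtain ⟨ρ', M₁, M₂, rfl, _, ⟨T', c, d, e3, r3, l3⟩⟩ := r1
    exact ⟨T', _, d, .snd e1 e3, r3, le_seq S l3 l1⟩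
termination_by structural h
end

/-- Fundamental lemma of the effect logical relation: syntactic typing implies
semantic typing, for values and for computations. -/
theorem fundamental_lemma {E : Type} (S : EffSig E) :
    (∀ {Γ : List (VTy E)} {V : Val} {A : VTy E}, VHasTy S Γ V A → VSem S Γ V A) ∧
    (∀ {Γ : List (VTy E)} {M : Comp} {φ : E} {B : CTy E}, CHasTy S Γ M φ B → CSem S Γ M φ B) := by
  exact ⟨fun h => fund_val S h, fun h => fund_comp S h⟩

end CBPVEff
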